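/- Let ε, p ∈ (0,1] and let k, r, n be positive integers. Let H be a 3-uniform hypergraph with n vertices and at least (13r/p)·√(k/ε)·n^{5/2} edges. Then E(H) contains a subset F with |F| ≥ |E(H)|/2 such that any pair of neighboring edges in F is (p,ε,k,r)-semi-admissible in H. -/

import Mathlib

/-!
Each graph on `n` vertices has `O(kn / (εp²))` edges that are not admissible. Indeed, fix an outcome
`U` of the random set and consider the edges of `G[U]` whose ends are not joined by `k` internally
disjoint paths of length at least two. By Menger's theorem (`exists_separator`) the ends of such an
edge are separated by deleting it together with fewer than `k` vertices; splitting along these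
separators, as in Mader's theorem on highly connected subgraphs, shows that there are at most `2kn`
such edges (`dartCount_le`). Averaging over `U` gives the claim (`card_not_edgeAdmissible_le`), since
a non-admissible edge fails with probability at least `εp²`.

Menger's theorem is derived from Hall's theorem: a perfect matching between two copies of
`V ⊕ Fin k`, in which a vertex is matched to itself or to a successor and `Fin k` supplies dummy
sources and sinks, is an injective self-map whose orbits out of `Fin k` are the required paths, while
a violated Hall condition is a separator.

Applied to all the graphs `H_x ∩ H_{x'}`, this bounds the number of neighboring pairs of edges of `H`
that are not admissible by `O(kn³ / (εp²))`. Discard each edge that, on one of its pairs `yz`, is in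
conflict with about half or more of the edges through `yz`. On pairs of codegree below a threshold
`t` this costs at most `t` edges per pair; on the other pairs each discarded edge is responsible for
at least `t / 4` conflicts. With `t` of order `r√(kn/ε) / p` at most half of the edges are lost
(`card_isBadTriple_le`, `two_mul_card_badEdges_le`), and two surviving neighboring edges have at least
`r` edges in common with which neither is in conflict (`semiAdmissible_of_not_mem_badEdges`).
-/

open Classical in
/-- The probability that a random subset `U` of the vertex set (each vertex chosen
independently with probability `p`) satisfies the predicate `E`. -/
noncomputable def vertexSubsetProb {V : Type*} [Fintype V] (p : ℝ) (E : Finset V → Prop) : ℝ :=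
  ∑ U : Finset V, if E U then p ^ U.card * (1 - p) ^ (Fintype.card V - U.card) else 0

/-- There exist `k` internally vertex-disjoint paths from `x` to `y`, all of whose vertices
lie in `U`, each different from the single-edge path `xy` (i.e. of length at least 2). -/
def HasKDisjointPaths {V : Type*} (G : SimpleGraph V) (U : Set V) (x y : V) (k : ℕ) : Prop :=
  ∃ P : Fin k → G.Walk x y,
    (∀ i, (P i).IsPath) ∧ (∀ i, 2 ≤ (P i).length) ∧
    (∀ i, ∀ v ∈ (P i).support, v ∈ U) ∧
    (∀ i j, i ≠ j → ∀ v, v ∈ (P i).support → v ∈ (P j).support → v = x ∨ v = y)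

/-- The pair `(x, y)` is a `(p, ε, k)`-admissible edge of `G`: conditioned on both `x` and `y`
belonging to the random vertex subset `U`, with probability at least `1 - ε` there are `k`
internally vertex-disjoint paths (other than the single-edge path) joining `x` and `y`
in the induced subgraph `G[U]`. -/
def EdgeAdmissible {V : Type*} [Fintype V] (G : SimpleGraph V) (p ε : ℝ) (k : ℕ)
    (x y : V) : Prop :=
  (1 - ε) * vertexSubsetProb p (fun U => x ∈ U ∧ y ∈ U) ≤
    vertexSubsetProb p (fun U => x ∈ U ∧ y ∈ U ∧ HasKDisjointPaths G (↑U) x y k)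

/-- The graph `H_x ∩ H_{x'}`: the intersection of the link graphs of `x` and `x'` in the
3-uniform hypergraph `H`; `y` and `z` are adjacent iff both `{x,y,z}` and `{x',y,z}` are
edges of `H`. -/
def linkInter {V : Type*} [DecidableEq V] (H : Finset (Finset V)) (x x' : V) :
    SimpleGraph V :=
  SimpleGraph.fromRel (fun y z => ({x, y, z} : Finset V) ∈ H ∧ ({x', y, z} : Finset V) ∈ H)

/-- The neighboring pair of hyperedges `(e, f)`, with `e = xyz`, `f = x'yz`, is
`(p, ε, k)`-admissible in `H` if the edge `yz` is `(p, ε, k)`-admissible in the graph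
`H_x ∩ H_{x'}`. -/
def PairAdmissible {V : Type*} [Fintype V] [DecidableEq V] (H : Finset (Finset V))
    (p ε : ℝ) (k : ℕ) (e f : Finset V) : Prop :=
  ∃ x x' y z : V, e = {x, y, z} ∧ f = {x', y, z} ∧ x ∉ f ∧ x' ∉ e ∧ y ≠ z ∧
    EdgeAdmissible (linkInter H x x') p ε k y z

/-- The neighboring pair of hyperedges `(e, f)` with `e = xyz`, `f = x'yz` is
`(p, ε, k, r)`-semi-admissible in `H` if there are at least `r` edges `g = x''yz` of `H`
such that `(e, g)` and `(g, f)` are both `(p, ε, k)`-admissible. -/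
def SemiAdmissible {V : Type*} [Fintype V] [DecidableEq V] (H : Finset (Finset V))
    (p ε : ℝ) (k r : ℕ) (e f : Finset V) : Prop :=
  ∃ S : Finset (Finset V), S ⊆ H ∧ r ≤ S.card ∧
    ∀ g ∈ S, e ∩ f ⊆ g ∧ PairAdmissible H p ε k e g ∧ PairAdmissible H p ε k g f

/-! ### Menger's theorem from Hall's theorem -/

/-- The orbit of a source under an injective "successor map" is a path until it returns to the
dummy vertices; injectivity keeps the orbits of distinct sources apart. -/
lemma hasKDisjointPaths_of_injective {V : Type*} [Fintype V] (G : SimpleGraph V) (U W : Set V)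
    (y z : V) (k : ℕ) (hne : y ≠ z) (hy : y ∈ U) (hz : z ∈ U)
    (hW : ∀ w ∈ W, w ∈ U ∧ w ≠ y ∧ w ≠ z)
    (f : V ⊕ Fin k → V ⊕ Fin k) (hf : Function.Injective f)
    (h1 : ∀ i, ∃ w, f (Sum.inr i) = Sum.inl w ∧ w ∈ W ∧ G.Adj y w)
    (h2 : ∀ v w, v ∈ W → f (Sum.inl v) = Sum.inl w → w = v ∨ (w ∈ W ∧ G.Adj v w))
    (h3 : ∀ v j, f (Sum.inl v) = Sum.inr j → G.Adj v z) :
    HasKDisjointPaths G U y z k := by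
  classical
  have hret : ∀ i : Fin k, ∃ m, ∃ j : Fin k, f^[m + 1] (Sum.inr i) = Sum.inr j := by
    intro i
    obtain ⟨m, hm, hp⟩ := hf.mem_periodicPts (Sum.inr i)
    refine ⟨m - 1, i, ?_⟩
    have : m - 1 + 1 = m := by omega
    rw [this]
    exact hp
  -- the orbit of `i` stays among the genuine vertices up to any time before the first return
  have hwalk : ∀ (i : Fin k) (w₁ : V), f (Sum.inr i) = Sum.inl w₁ → w₁ ∈ W → ∀ m : ℕ,
      (∀ l < m, ∀ j, f^[l + 1] (Sum.inr i) ≠ Sum.inr j) → 0 < m →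
      ∃ w, f^[m] (Sum.inr i) = Sum.inl w ∧ ∃ q : G.Walk w₁ w, ∀ v ∈ q.support,
        v ∈ W ∧ ∃ l < m, f^[l + 1] (Sum.inr i) = Sum.inl v := by
    intro i w₁ hw₁ hw₁W m
    induction m with
    | zero => intro _ h; omega
    | succ m ih =>
      intro hm _
      rcases Nat.eq_zero_or_pos m with rfl | hpos
      · refine ⟨w₁, by simpa using hw₁, SimpleGraph.Walk.nil, ?_⟩
        intro v hv
        simp only [SimpleGraph.Walk.support_nil, List.mem_singleton] at hv
        subst hv
        exact ⟨hw₁W, 0, by omega, by simpa using hw₁⟩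
      · obtain ⟨w, hw, q, hq⟩ := ih (fun l hl => hm l (by omega)) hpos
        have hwW : w ∈ W := (hq w q.end_mem_support).1
        rcases hfw : f (Sum.inl w) with w' | j
        · have hnext : f^[m + 1] (Sum.inr i) = Sum.inl w' := by
            rw [Function.iterate_succ_apply', hw, hfw]
          rcases h2 w w' hwW hfw with rfl | ⟨hw'W, hadj⟩
          · exact ⟨w', hnext, q, fun v hv =>
              ⟨(hq v hv).1, by obtain ⟨l, hl, h⟩ := (hq v hv).2; exact ⟨l, by omega, h⟩⟩⟩
          · refine ⟨w', hnext, q.concat hadj, ?_⟩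
            intro v hv
            rw [SimpleGraph.Walk.support_concat, List.mem_append] at hv
            rcases hv with hv | hv
            · obtain ⟨l, hl, h⟩ := (hq v hv).2
              exact ⟨(hq v hv).1, l, by omega, h⟩
            · simp only [List.mem_singleton] at hv
              subst hv
              exact ⟨hw'W, m, by omega, hnext⟩
        · exact absurd (by rw [Function.iterate_succ_apply', hw, hfw]) (hm m (by omega) j)
  have hpath : ∀ i : Fin k, ∃ P : G.Walk y z, P.IsPath ∧ 2 ≤ P.length ∧
      ∀ v ∈ P.support, v = y ∨ v = z ∨ (v ∈ W ∧ ∃ l, f^[l + 1] (Sum.inr i) = Sum.inl v ∧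
        ∀ l' ≤ l, ∀ j, f^[l' + 1] (Sum.inr i) ≠ Sum.inr j) := by
    intro i
    obtain ⟨w₁, hw₁, hw₁W, hadj₁⟩ := h1 i
    obtain ⟨j, hj⟩ := Nat.find_spec (hret i)
    have hmin : ∀ l < Nat.find (hret i), ∀ j, f^[l + 1] (Sum.inr i) ≠ Sum.inr j :=
      fun l hl j h => Nat.find_min (hret i) hl ⟨j, h⟩
    have hpos : 0 < Nat.find (hret i) := by
      rcases Nat.eq_zero_or_pos (Nat.find (hret i)) with h0 | h0
      · rw [h0] at hj; simp [hw₁] at hj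
      · exact h0
    obtain ⟨w, hw, q, hq⟩ := hwalk i w₁ hw₁ hw₁W _ hmin hpos
    have hadjz : G.Adj w z := by
      rw [Function.iterate_succ_apply', hw] at hj
      exact h3 w j hj
    have hb : ∀ v ∈ q.bypass.support, v ∈ q.support := fun v hv => q.support_bypass_subset_support hv
    have hzq : z ∉ q.bypass.support := fun h => (hW z (hq z (hb z h)).1).2.2 rfl
    have hyq : y ∉ (q.bypass.concat hadjz).support := by
      rw [SimpleGraph.Walk.support_concat, List.mem_append]
      rintro (h | h)
      · exact (hW y (hq y (hb y h)).1).2.1 rfl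
      · simp only [List.mem_singleton] at h
        exact hne h
    refine ⟨SimpleGraph.Walk.cons hadj₁ (q.bypass.concat hadjz), ?_, ?_, ?_⟩
    · rw [SimpleGraph.Walk.cons_isPath_iff]
      exact ⟨q.bypass_isPath.concat hzq hadjz, hyq⟩
    · simp
    · intro v hv
      rw [SimpleGraph.Walk.support_cons, List.mem_cons, SimpleGraph.Walk.support_concat,
        List.mem_append] at hv
      rcases hv with hv | hv | hv
      · exact Or.inl hv
      · obtain ⟨hvW, l, hl, h⟩ := hq v (hb v hv)
        exact Or.inr (Or.inr ⟨hvW, l, h, fun l' hl' => hmin l' (by omega)⟩)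
      · simp only [List.mem_singleton] at hv
        exact Or.inr (Or.inl hv)
  choose P hP hlen hsup using hpath
  -- two orbits that meet coincide: cancel the common number of steps
  have hdisj : ∀ (i i' : Fin k) (l l' : ℕ), l ≤ l' →
      f^[l + 1] (Sum.inr i) = f^[l' + 1] (Sum.inr i') →
      (∀ m ≤ l', ∀ j, f^[m + 1] (Sum.inr i') ≠ Sum.inr j) → i = i' := by
    intro i i' l l' hll heq hno
    have hsplit : l' + 1 = (l + 1) + (l' - l) := by omega
    rw [hsplit, Function.iterate_add_apply f (l + 1) (l' - l)] at heq
    have := hf.iterate (l + 1) heq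
    rcases hd : l' - l with _ | d
    · rw [hd] at this
      simpa using this
    · rw [hd] at this
      exact absurd this.symm (hno d (by omega) i)
  refine ⟨P, hP, hlen, ?_, ?_⟩
  · intro i v hv
    rcases hsup i v hv with rfl | rfl | h
    · exact hy
    · exact hz
    · exact (hW v h.1).1
  · intro i i' hii v hv hv'
    rcases hsup i v hv with h | h | ⟨-, l, hl, hno⟩
    · exact Or.inl h
    · exact Or.inr h
    rcases hsup i' v hv' with h | h | ⟨-, l', hl', hno'⟩
    · exact Or.inl h
    · exact Or.inr h
    exfalso
    rcases le_total l l' with h | h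
    · exact hii (hdisj i i' l l' h (hl.trans hl'.symm) hno')
    · exact hii (hdisj i' i l' l h (hl'.trans hl.symm) hno).symm

/-- A form of Menger's theorem: if the distinct vertices `y` and `z` are not joined in `G[U]` by
`k` internally disjoint paths of length at least two, then deleting fewer than `k` vertices and
the edge `yz` separates them in `G[U]`. Here `X` is the side of `y` and `Z` the deleted set. -/
lemma exists_separator {V : Type*} [Fintype V] (G : SimpleGraph V) (U : Finset V)
    (k : ℕ) (y z : V) (hne : y ≠ z) (hy : y ∈ U) (hz : z ∈ U)
    (h : ¬ HasKDisjointPaths G (↑U) y z k) :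
    ∃ X Z : Finset V, y ∈ X ∧ z ∉ X ∧ z ∉ Z ∧ Disjoint X Z ∧ Z.card < k ∧
      ∀ u ∈ X, ∀ v, v ∉ X → v ∉ Z → u ∈ U → v ∈ U → G.Adj u v → u = y ∧ v = z := by
  classical
  set W : Finset V := U.filter (fun w => w ≠ y ∧ w ≠ z) with hWdef
  have hWmem : ∀ w, w ∈ W ↔ w ∈ U ∧ w ≠ y ∧ w ≠ z := by intro w; simp [hWdef]
  -- the two copies of `Fin k` serve as sources on the left and as sinks on the right
  let R : V ⊕ Fin k → V ⊕ Fin k → Prop := fun a b => match a, b with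
    | .inl v, .inl w => w = v ∨ (v ∈ W ∧ w ∈ W ∧ G.Adj v w)
    | .inl v, .inr _ => v ∈ W ∧ G.Adj v z
    | .inr _, .inl w => w ∈ W ∧ G.Adj y w
    | .inr _, .inr _ => False
  let t : V ⊕ Fin k → Finset (V ⊕ Fin k) := fun a => Finset.univ.filter (R a)
  have ht : ∀ a b, b ∈ t a ↔ R a b := by intro a b; simp [t]
  have hfail : ¬ ∀ S : Finset (V ⊕ Fin k), S.card ≤ (S.biUnion t).card := by
    intro hall
    obtain ⟨f, hf, hft⟩ := (Finset.all_card_le_biUnion_card_iff_exists_injective t).1 hall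
    apply h
    refine hasKDisjointPaths_of_injective G (↑U) (↑W) y z k hne hy hz
      (fun w hw => (hWmem w).1 hw) f hf ?_ ?_ ?_
    · intro i
      have := (ht _ _).1 (hft (Sum.inr i))
      rcases hfi : f (Sum.inr i) with w | j
      · rw [hfi] at this
        exact ⟨w, rfl, this.1, this.2⟩
      · rw [hfi] at this
        exact this.elim
    · intro v w _ hvw
      have := (ht _ _).1 (hft (Sum.inl v))
      rw [hvw] at this
      exact this.imp id (fun h => h.2)
    · intro v j hvj
      have := (ht _ _).1 (hft (Sum.inl v))
      rw [hvj] at this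
      exact this.2
  push Not at hfail
  obtain ⟨S, hS⟩ := hfail
  have hsrc : ∃ i, Sum.inr i ∈ S := by
    by_contra hno
    push Not at hno
    refine absurd (Finset.card_le_card ?_) (not_le.2 hS)
    rintro (v | i) ha
    · exact Finset.mem_biUnion.2 ⟨_, ha, (ht _ _).2 (Or.inl rfl)⟩
    · exact absurd ha (hno i)
  obtain ⟨i₀, hi₀⟩ := hsrc
  have hnz : ∀ v, Sum.inl v ∈ S → v ∈ W → ¬ G.Adj v z := by
    intro v hv hvW hadj
    refine absurd (Finset.card_le_card ?_) (not_le.2 hS)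
    rintro (u | i) ha
    · exact Finset.mem_biUnion.2 ⟨_, ha, (ht _ _).2 (Or.inl rfl)⟩
    · exact Finset.mem_biUnion.2 ⟨_, hv, (ht _ _).2 ⟨hvW, hadj⟩⟩
  set A : Finset V := Finset.univ.filter (fun v => Sum.inl v ∈ S) with hA
  have hAmem : ∀ v, v ∈ A ↔ Sum.inl v ∈ S := by intro v; simp [hA]
  set Z : Finset V := (W \ A).filter (fun w => G.Adj y w ∨ ∃ v ∈ A, v ∈ W ∧ G.Adj v w) with hZ
  have hZmem : ∀ w, w ∈ Z ↔ (w ∈ W ∧ w ∉ A) ∧ (G.Adj y w ∨ ∃ v ∈ A, v ∈ W ∧ G.Adj v w) := by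
    intro w; simp [hZ]
  have hZcard : Z.card < k := by
    have hdis : Disjoint A Z := by
      rw [Finset.disjoint_left]
      intro v hv hvZ
      exact ((hZmem v).1 hvZ).1.2 hv
    have hsub : (A ∪ Z).map ⟨(Sum.inl : V → V ⊕ Fin k), Sum.inl_injective⟩ ⊆ S.biUnion t := by
      intro a ha
      obtain ⟨v, hv, rfl⟩ := Finset.mem_map.1 ha
      rw [Finset.mem_biUnion]
      rcases Finset.mem_union.1 hv with hv | hv
      · exact ⟨_, (hAmem v).1 hv, (ht _ _).2 (Or.inl rfl)⟩
      · obtain ⟨⟨hvW, -⟩, hadj | ⟨u, huA, huW, hadj⟩⟩ := (hZmem v).1 hv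
        · exact ⟨_, hi₀, (ht _ _).2 ⟨hvW, hadj⟩⟩
        · exact ⟨_, (hAmem u).1 huA, (ht _ _).2 (Or.inr ⟨huW, hvW, hadj⟩)⟩
    have hle := Finset.card_le_card hsub
    rw [Finset.card_map, Finset.card_union_of_disjoint hdis] at hle
    have hSle : S.card ≤ A.card + k := by
      have : S ⊆ A.disjSum (Finset.univ : Finset (Fin k)) := by
        rintro (v | i) ha
        · simpa using (hAmem v).2 ha
        · simp
      simpa using Finset.card_le_card this
    omega
  refine ⟨insert y (A ∩ W), Z, by simp, ?_, ?_, ?_, hZcard, ?_⟩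
  · simp [hWmem, hne.symm]
  · simp [hZmem, hWmem]
  · rw [Finset.disjoint_left]
    intro v hv hvZ
    have hvZ' := ((hZmem v).1 hvZ).1
    rcases Finset.mem_insert.1 hv with rfl | hv
    · exact ((hWmem v).1 hvZ'.1).2.1 rfl
    · exact hvZ'.2 (Finset.mem_inter.1 hv).1
  · intro u hu v hvX hvZ huU hvU hadj
    have hvy : v ≠ y := fun h => hvX (h ▸ Finset.mem_insert_self _ _)
    rcases Finset.mem_insert.1 hu with rfl | hu
    · refine ⟨rfl, ?_⟩
      by_contra hvz
      have hvW : v ∈ W := (hWmem v).2 ⟨hvU, hvy, hvz⟩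
      exact hvZ ((hZmem v).2 ⟨⟨hvW, fun hvA => hvX (by simp [hvA, hvW])⟩, Or.inl hadj⟩)
    · obtain ⟨huA, huW⟩ := Finset.mem_inter.1 hu
      exfalso
      by_cases hvz : v = z
      · exact hnz u ((hAmem u).1 huA) huW (hvz ▸ hadj)
      · have hvW : v ∈ W := (hWmem v).2 ⟨hvU, hvy, hvz⟩
        exact hvZ ((hZmem v).2 ⟨⟨hvW, fun hvA => hvX (by simp [hvA, hvW])⟩,
          Or.inr ⟨u, huA, huW, hadj⟩⟩)

/-! ### Edges of low local connectivity -/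

open Classical in
/-- The number of ordered pairs of adjacent vertices of `G` inside `W`, that is, twice the number
of edges of `G[W]`. -/
noncomputable def dartCount {V : Type*} [Fintype V] (G : SimpleGraph V) (W : Finset V) : ℕ :=
  ((W ×ˢ W).filter (fun a => G.Adj a.1 a.2)).card

/-- A Mader-type bound: if the ends of each edge can be separated by deleting that edge and fewer
than `k` vertices, then `G[W]` has at most `2k(|W| - k)` edges. The induction deletes a vertex of
small degree or, if there is none, splits `W` along a separator. -/
lemma dartCount_add_le {V : Type*} [Fintype V] (G : SimpleGraph V) (k : ℕ)
    (hcut : ∀ y z, G.Adj y z → ∃ X Z : Finset V, y ∈ X ∧ z ∉ X ∧ z ∉ Z ∧ Disjoint X Z ∧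
      Z.card < k ∧ ∀ u ∈ X, ∀ v, v ∉ X → v ∉ Z → G.Adj u v → u = y ∧ v = z) :
    ∀ (n : ℕ) (W : Finset V), W.card = n → 2 * k ≤ n →
      dartCount G W + 4 * k ^ 2 ≤ 4 * k * n := by
  classical
  intro n
  induction n using Nat.strong_induction_on with
  | _ n ih =>
  intro W hWn hkn
  rcases Nat.eq_or_lt_of_le hkn with heq | hlt
  · have : dartCount G W ≤ W.card * W.card := by
      unfold dartCount
      exact (Finset.card_filter_le _ _).trans (by rw [Finset.card_product])
    rw [hWn, ← heq] at this
    rw [← heq]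
    nlinarith
  by_cases hdeg : ∃ w ∈ W, (W.filter (G.Adj w)).card ≤ 2 * k
  · obtain ⟨w, hw, hwd⟩ := hdeg
    have hce : (W.erase w).card = n - 1 := by rw [Finset.card_erase_of_mem hw, hWn]
    have h1 := ih (n - 1) (by omega) (W.erase w) hce (by omega)
    have h2 : dartCount G W ≤ dartCount G (W.erase w) + (W.filter (G.Adj w)).card
        + (W.filter (G.Adj w)).card := by
      have hsub : (W ×ˢ W).filter (fun a => G.Adj a.1 a.2) ⊆
          ((W.erase w ×ˢ W.erase w).filter (fun a => G.Adj a.1 a.2)) ∪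
          (W.filter (G.Adj w)).image (fun v => (w, v)) ∪
          (W.filter (G.Adj w)).image (fun v => (v, w)) := by
        rintro ⟨a, b⟩ hab
        simp only [Finset.mem_filter, Finset.mem_product] at hab
        obtain ⟨⟨ha, hb⟩, hadj⟩ := hab
        simp only [Finset.mem_union, Finset.mem_filter, Finset.mem_product, Finset.mem_image,
          Finset.mem_erase, Prod.mk.injEq]
        by_cases haw : a = w
        · subst haw
          exact Or.inl (Or.inr ⟨b, ⟨hb, hadj⟩, rfl, rfl⟩)
        · by_cases hbw : b = w
          · subst hbw
            exact Or.inr ⟨a, ⟨ha, hadj.symm⟩, rfl, rfl⟩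
          · exact Or.inl (Or.inl ⟨⟨⟨haw, ha⟩, hbw, hb⟩, hadj⟩)
      unfold dartCount
      refine (Finset.card_le_card hsub).trans ((Finset.card_union_le _ _).trans ?_)
      gcongr
      · refine (Finset.card_union_le _ _).trans ?_
        gcongr
        exact Finset.card_image_le
      · exact Finset.card_image_le
    obtain ⟨m, rfl⟩ : ∃ m, n = m + 1 := ⟨n - 1, by omega⟩
    simp only [Nat.add_sub_cancel] at h1
    nlinarith
  · push Not at hdeg
    obtain ⟨y, hyW⟩ : W.Nonempty := by rw [← Finset.card_pos]; omega
    obtain ⟨z, hz⟩ : (W.filter (G.Adj y)).Nonempty := by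
      rw [← Finset.card_pos]; have := hdeg y hyW; omega
    obtain ⟨hzW, hadj⟩ := Finset.mem_filter.1 hz
    obtain ⟨X, Z, hyX, hzX, hzZ, hXZ, hZk, hsep⟩ := hcut y z hadj
    have hXZ' := Finset.disjoint_left.1 hXZ
    set W₁ := W.filter (fun v => v ∈ X ∨ v ∈ Z) with hW₁
    set W₂ := W.filter (fun v => v ∉ X) with hW₂
    have hc1 : 2 * k ≤ W₁.card := by
      have hsub : W.filter (G.Adj y) ⊆ insert z W₁ := by
        intro v hv
        obtain ⟨hvW, hv⟩ := Finset.mem_filter.1 hv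
        by_cases hvX : v ∈ X ∨ v ∈ Z
        · exact Finset.mem_insert_of_mem (Finset.mem_filter.2 ⟨hvW, hvX⟩)
        · push Not at hvX
          rw [(hsep y hyX v hvX.1 hvX.2 hv).2]
          exact Finset.mem_insert_self _ _
      have := (Finset.card_le_card hsub).trans (Finset.card_insert_le _ _)
      have := hdeg y hyW
      omega
    have hc2 : 2 * k ≤ W₂.card := by
      have hsub : W.filter (G.Adj z) ⊆ insert y W₂ := by
        intro v hv
        obtain ⟨hvW, hv⟩ := Finset.mem_filter.1 hv
        by_cases hvX : v ∈ X
        · rw [(hsep v hvX z hzX hzZ hv.symm).1]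
          exact Finset.mem_insert_self _ _
        · exact Finset.mem_insert_of_mem (Finset.mem_filter.2 ⟨hvW, hvX⟩)
      have := (Finset.card_le_card hsub).trans (Finset.card_insert_le _ _)
      have := hdeg z hzW
      omega
    have hl1 : W₁.card < n := by
      rw [← hWn]
      refine Finset.card_lt_card (Finset.filter_ssubset.2 ⟨z, hzW, ?_⟩)
      exact fun h => h.elim hzX hzZ
    have hl2 : W₂.card < n := by
      rw [← hWn]
      exact Finset.card_lt_card (Finset.filter_ssubset.2 ⟨y, hyW, fun h => h hyX⟩)
    have hsum : W₁.card + W₂.card + 1 ≤ n + k := by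
      have hun : W₁ ∪ W₂ ⊆ W :=
        Finset.union_subset (Finset.filter_subset _ _) (Finset.filter_subset _ _)
      have hin : W₁ ∩ W₂ ⊆ Z := by
        intro v hv
        simp only [hW₁, hW₂, Finset.mem_inter, Finset.mem_filter] at hv
        tauto
      have := Finset.card_union_add_card_inter W₁ W₂
      have := Finset.card_le_card hun
      have := Finset.card_le_card hin
      omega
    have hd : dartCount G W ≤ dartCount G W₁ + dartCount G W₂ + 2 := by
      have hsub : (W ×ˢ W).filter (fun a => G.Adj a.1 a.2) ⊆
          ((W₁ ×ˢ W₁).filter (fun a => G.Adj a.1 a.2)) ∪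
          ((W₂ ×ˢ W₂).filter (fun a => G.Adj a.1 a.2)) ∪ {(y, z), (z, y)} := by
        rintro ⟨a, b⟩ hab
        simp only [Finset.mem_filter, Finset.mem_product] at hab
        obtain ⟨⟨ha, hb⟩, hadj'⟩ := hab
        simp only [hW₁, hW₂, Finset.mem_union, Finset.mem_filter, Finset.mem_product,
          Finset.mem_insert, Finset.mem_singleton, Prod.mk.injEq]
        by_cases haX : a ∈ X
        · by_cases hbX : b ∈ X ∨ b ∈ Z
          · exact Or.inl (Or.inl ⟨⟨⟨ha, Or.inl haX⟩, hb, hbX⟩, hadj'⟩)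
          · push Not at hbX
            exact Or.inr (Or.inl (hsep a haX b hbX.1 hbX.2 hadj'))
        · by_cases hbX : b ∈ X
          · by_cases haZ : a ∈ Z
            · exact Or.inl (Or.inl ⟨⟨⟨ha, Or.inr haZ⟩, hb, Or.inl hbX⟩, hadj'⟩)
            · have := hsep b hbX a haX haZ hadj'.symm
              exact Or.inr (Or.inr ⟨this.2, this.1⟩)
          · exact Or.inl (Or.inr ⟨⟨⟨ha, haX⟩, hb, hbX⟩, hadj'⟩)
      unfold dartCount
      refine (Finset.card_le_card hsub).trans ((Finset.card_union_le _ _).trans ?_)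
      gcongr
      · exact Finset.card_union_le _ _
      · exact Finset.card_le_two
    have i1 := ih _ hl1 W₁ rfl hc1
    have i2 := ih _ hl2 W₂ rfl hc2
    have hk1 : 1 ≤ k := by omega
    have hm := Nat.mul_le_mul_left (4 * k) hsum
    nlinarith

lemma dartCount_le {V : Type*} [Fintype V] (G : SimpleGraph V) (k : ℕ)
    (hcut : ∀ y z, G.Adj y z → ∃ X Z : Finset V, y ∈ X ∧ z ∉ X ∧ z ∉ Z ∧ Disjoint X Z ∧
      Z.card < k ∧ ∀ u ∈ X, ∀ v, v ∉ X → v ∉ Z → G.Adj u v → u = y ∧ v = z) :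
    dartCount G Finset.univ ≤ 4 * k * Fintype.card V := by
  classical
  rcases le_total (2 * k) (Fintype.card V) with h | h
  · have := dartCount_add_le G k hcut (Fintype.card V) Finset.univ Finset.card_univ h
    omega
  · have : dartCount G Finset.univ ≤ Fintype.card V * Fintype.card V := by
      unfold dartCount
      refine (Finset.card_filter_le _ _).trans ?_
      rw [Finset.card_product, Finset.card_univ]
    refine this.trans (Nat.mul_le_mul_right _ (by omega))

open Classical in
/-- In `G[U]`, at most `2kn` edges have ends not joined by `k` internally disjoint paths of length
at least two; edges are counted as ordered pairs. -/
lemma card_disconnected_pairs_le {V : Type*} [Fintype V] (G : SimpleGraph V) (k : ℕ)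
    (U : Finset V) :
    ((Finset.univ : Finset (V × V)).filter (fun a => G.Adj a.1 a.2 ∧ a.1 ∈ U ∧ a.2 ∈ U ∧
      ¬ HasKDisjointPaths G (↑U) a.1 a.2 k ∧ ¬ HasKDisjointPaths G (↑U) a.2 a.1 k)).card
      ≤ 4 * k * Fintype.card V := by
  let B : SimpleGraph V :=
    { Adj := fun y z => G.Adj y z ∧ y ∈ U ∧ z ∈ U ∧ ¬ HasKDisjointPaths G (↑U) y z k ∧
        ¬ HasKDisjointPaths G (↑U) z y k
      symm := ⟨fun y z h => ⟨h.1.symm, h.2.2.1, h.2.1, h.2.2.2.2, h.2.2.2.1⟩⟩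
      loopless := ⟨fun y h => G.loopless.irrefl y h.1⟩ }
  have hB := dartCount_le B k (by
    intro y z hyz
    obtain ⟨X, Z, h1, h2, h3, h4, h5, h6⟩ :=
      exists_separator G U k y z hyz.1.ne hyz.2.1 hyz.2.2.1 hyz.2.2.2.1
    exact ⟨X, Z, h1, h2, h3, h4, h5, fun u hu v hv hv' hadj =>
      h6 u hu v hv hv' hadj.2.1 hadj.2.2.1 hadj.1⟩)
  refine le_trans (le_of_eq ?_) hB
  unfold dartCount
  congr 1
  ext a
  simp [B]

/-! ### Non-admissible edges of a graph -/

lemma HasKDisjointPaths.symm {V : Type*} {G : SimpleGraph V} {U : Set V} {x y : V} {k : ℕ}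
    (h : HasKDisjointPaths G U x y k) : HasKDisjointPaths G U y x k := by
  obtain ⟨P, h1, h2, h3, h4⟩ := h
  refine ⟨fun i => (P i).reverse, fun i => (h1 i).reverse, fun i => by simpa using h2 i,
    fun i v hv => h3 i v (by simpa using hv), fun i j hij v hv hv' => ?_⟩
  exact (h4 i j hij v (by simpa using hv) (by simpa using hv')).symm

lemma hasKDisjointPaths_comm {V : Type*} (G : SimpleGraph V) (U : Set V) (x y : V) (k : ℕ) :
    HasKDisjointPaths G U x y k ↔ HasKDisjointPaths G U y x k :=
  ⟨HasKDisjointPaths.symm, HasKDisjointPaths.symm⟩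

lemma edgeAdmissible_comm {V : Type*} [Fintype V] (G : SimpleGraph V) (p ε : ℝ) (k : ℕ)
    (x y : V) : EdgeAdmissible G p ε k x y ↔ EdgeAdmissible G p ε k y x := by
  unfold EdgeAdmissible
  have h1 : (fun U : Finset V => x ∈ U ∧ y ∈ U) = fun U => y ∈ U ∧ x ∈ U := by
    funext U; exact propext and_comm
  have h2 : (fun U : Finset V => x ∈ U ∧ y ∈ U ∧ HasKDisjointPaths G (↑U) x y k) =
      fun U : Finset V => y ∈ U ∧ x ∈ U ∧ HasKDisjointPaths G (↑U) y x k := by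
    funext U
    rw [hasKDisjointPaths_comm G (↑U) x y k]
    exact propext and_left_comm
  rw [h1, h2]

lemma linkInter_comm {V : Type*} [DecidableEq V] (H : Finset (Finset V)) (x x' : V) :
    linkInter H x x' = linkInter H x' x := by
  unfold linkInter
  congr 1
  funext y z
  exact propext and_comm

/-- The weight of the outcome `U` of the random vertex subset. -/
noncomputable def subsetWeight {V : Type*} [Fintype V] (p : ℝ) (U : Finset V) : ℝ :=
  p ^ U.card * (1 - p) ^ (Fintype.card V - U.card)

lemma subsetWeight_nonneg {V : Type*} [Fintype V] {p : ℝ} (hp : 0 < p) (hp1 : p ≤ 1)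
    (U : Finset V) : 0 ≤ subsetWeight p U :=
  mul_nonneg (pow_nonneg hp.le _) (pow_nonneg (by linarith) _)

lemma sum_subsetWeight {V : Type*} [Fintype V] (p : ℝ) :
    ∑ U : Finset V, subsetWeight p U = 1 := by
  classical
  have h := Fintype.prod_add (fun _ : V => p) (fun _ : V => 1 - p)
  simp only [Finset.prod_const, Finset.card_compl] at h
  unfold subsetWeight
  rw [← h]
  simp

lemma vertexSubsetProb_pair {V : Type*} [Fintype V] (p : ℝ) {y z : V} (hne : y ≠ z) :
    vertexSubsetProb p (fun U => y ∈ U ∧ z ∈ U) = p ^ 2 := by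
  classical
  -- expand `∏ (p + g)`, where `g` vanishes at `y` and `z` and equals `1 - p` elsewhere
  have h := Fintype.prod_add (fun _ : V => p)
    (fun v : V => if v = y ∨ v = z then (0 : ℝ) else 1 - p)
  have hl : ∏ a : V, (p + if a = y ∨ a = z then (0 : ℝ) else 1 - p) = p ^ 2 := by
    have : ∀ a : V, (p + if a = y ∨ a = z then (0 : ℝ) else 1 - p) =
        if a ∈ ({y, z} : Finset V) then p else 1 := by
      intro a
      by_cases ha : a = y ∨ a = z <;> simp [ha]
    simp_rw [this]
    rw [Finset.prod_ite_mem]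
    simp [Finset.card_pair hne]
  rw [← hl, h]
  unfold vertexSubsetProb
  refine Finset.sum_congr rfl fun U _ => ?_
  by_cases hU : y ∈ U ∧ z ∈ U
  · rw [if_pos hU, Finset.prod_const]
    congr 1
    rw [← Finset.card_compl, ← Finset.prod_const]
    refine Finset.prod_congr rfl fun v hv => ?_
    rw [if_neg]
    rintro (rfl | rfl)
    · exact (Finset.mem_compl.1 hv) hU.1
    · exact (Finset.mem_compl.1 hv) hU.2
  · rw [if_neg hU]
    symm
    apply mul_eq_zero_of_right
    by_cases hy : y ∈ U
    · have hz : z ∉ U := fun hz => hU ⟨hy, hz⟩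
      exact Finset.prod_eq_zero (Finset.mem_compl.2 hz) (by simp)
    · exact Finset.prod_eq_zero (Finset.mem_compl.2 hy) (by simp)

/-- For an edge that is not admissible, the failure event has probability at least `ε p²`. -/
lemma le_prob_of_not_edgeAdmissible {V : Type*} [Fintype V] (G : SimpleGraph V) {p ε : ℝ} {k : ℕ}
    {y z : V} (hne : y ≠ z) (h : ¬ EdgeAdmissible G p ε k y z) :
    ε * p ^ 2 ≤ vertexSubsetProb p
      (fun U => y ∈ U ∧ z ∈ U ∧ ¬ HasKDisjointPaths G (↑U) y z k) := by
  unfold EdgeAdmissible at h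
  have hsplit : vertexSubsetProb p (fun U => y ∈ U ∧ z ∈ U) =
      vertexSubsetProb p (fun U => y ∈ U ∧ z ∈ U ∧ HasKDisjointPaths G (↑U) y z k) +
      vertexSubsetProb p (fun U => y ∈ U ∧ z ∈ U ∧ ¬ HasKDisjointPaths G (↑U) y z k) := by
    unfold vertexSubsetProb
    rw [← Finset.sum_add_distrib]
    refine Finset.sum_congr rfl fun U _ => ?_
    by_cases h1 : y ∈ U <;> by_cases h2 : z ∈ U <;>
      by_cases h3 : HasKDisjointPaths G (↑U) y z k <;> simp [h1, h2, h3]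
  rw [vertexSubsetProb_pair p hne] at h hsplit
  linarith

open Classical in
/-- The number of (ordered) adjacent pairs of `G` that are not admissible is at most
`4kn / (ε p²)`: average the number of failing pairs over the random subset. -/
lemma card_not_edgeAdmissible_le {V : Type*} [Fintype V] (G : SimpleGraph V) {p ε : ℝ}
    (hp : 0 < p) (hp1 : p ≤ 1) (k : ℕ) :
    (((Finset.univ : Finset (V × V)).filter
      (fun a => G.Adj a.1 a.2 ∧ ¬ EdgeAdmissible G p ε k a.1 a.2)).card : ℝ) * (ε * p ^ 2) ≤
      4 * k * Fintype.card V := by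
  set T := (Finset.univ : Finset (V × V)).filter
      (fun a => G.Adj a.1 a.2 ∧ ¬ EdgeAdmissible G p ε k a.1 a.2) with hT
  calc (T.card : ℝ) * (ε * p ^ 2) = ∑ a ∈ T, ε * p ^ 2 := by simp
    _ ≤ ∑ a ∈ T, vertexSubsetProb p
        (fun U => a.1 ∈ U ∧ a.2 ∈ U ∧ ¬ HasKDisjointPaths G (↑U) a.1 a.2 k) := by
      refine Finset.sum_le_sum fun a ha => ?_
      have ha := (Finset.mem_filter.1 ha).2
      exact le_prob_of_not_edgeAdmissible G ha.1.ne ha.2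
    _ = ∑ U : Finset V, ∑ a ∈ T,
        if a.1 ∈ U ∧ a.2 ∈ U ∧ ¬ HasKDisjointPaths G (↑U) a.1 a.2 k
          then subsetWeight p U else 0 := by
      unfold vertexSubsetProb subsetWeight
      rw [Finset.sum_comm]
      exact Finset.sum_congr rfl fun U _ => Finset.sum_congr rfl fun a _ => by congr
    _ ≤ ∑ U : Finset V, (4 * k * Fintype.card V : ℝ) * subsetWeight p U := by
      refine Finset.sum_le_sum fun U _ => ?_
      rw [← Finset.sum_filter, Finset.sum_const, nsmul_eq_mul]
      refine mul_le_mul_of_nonneg_right ?_ (subsetWeight_nonneg hp hp1 U)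
      have hle : ((_ : ℕ) : ℝ) ≤ ((4 * k * Fintype.card V : ℕ) : ℝ) :=
        Nat.cast_le.2 (card_disconnected_pairs_le G k U)
      push_cast at hle
      refine le_trans ?_ hle
      refine Nat.cast_le.2 (Finset.card_le_card fun a ha => ?_)
      simp only [hT, Finset.mem_filter, Finset.mem_univ, true_and] at ha ⊢
      exact ⟨ha.1.1, ha.2.1, ha.2.2.1, ha.2.2.2, fun h => ha.2.2.2 h.symm⟩
    _ = 4 * k * Fintype.card V := by
      rw [← Finset.mul_sum, sum_subsetWeight, mul_one]

/-! ### Counting conflicts in the hypergraph -/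

/-- The common neighbourhood, or codegree set, of `y` and `z`: the vertices completing `yz` to an
edge of `H`. -/
def completions {V : Type*} [Fintype V] [DecidableEq V] (H : Finset (Finset V)) (y z : V) :
    Finset V :=
  Finset.univ.filter (fun x => ({x, y, z} : Finset V) ∈ H)

open Classical in
/-- The completions `x'` of `yz` for which `xyz` and `x'yz` do not form an admissible pair. The
vertex `x' = x` may be included. -/
noncomputable def badCompletions {V : Type*} [Fintype V] [DecidableEq V] (H : Finset (Finset V))
    (p ε : ℝ) (k : ℕ) (x y z : V) : Finset V :=
  (completions H y z).filter (fun x' => ¬ EdgeAdmissible (linkInter H x x') p ε k y z)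

/-- The edge `xyz` conflicts with nearly half or more of the edges containing `yz`. -/
def IsBadTriple {V : Type*} [Fintype V] [DecidableEq V] (H : Finset (Finset V))
    (p ε : ℝ) (k r : ℕ) (x y z : V) : Prop :=
  y ≠ z ∧ x ∈ completions H y z ∧
    (completions H y z).card < 2 * (badCompletions H p ε k x y z).card + (r + 2)

lemma mem_completions {V : Type*} [Fintype V] [DecidableEq V] {H : Finset (Finset V)}
    {x y z : V} : x ∈ completions H y z ↔ ({x, y, z} : Finset V) ∈ H := by
  simp [completions]

lemma completions_comm {V : Type*} [Fintype V] [DecidableEq V] (H : Finset (Finset V))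
    (y z : V) : completions H y z = completions H z y := by
  ext x
  rw [mem_completions, mem_completions, Finset.pair_comm]

lemma IsBadTriple.symm {V : Type*} [Fintype V] [DecidableEq V] {H : Finset (Finset V)}
    {p ε : ℝ} {k r : ℕ} {x y z : V} (h : IsBadTriple H p ε k r x y z) :
    IsBadTriple H p ε k r x z y := by
  have hb : badCompletions H p ε k x z y = badCompletions H p ε k x y z := by
    ext x'
    simp only [badCompletions, Finset.mem_filter]
    rw [completions_comm, edgeAdmissible_comm]
  unfold IsBadTriple
  rw [hb, completions_comm H z y]
  exact ⟨h.1.symm, h.2⟩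

/-- A bound on the number of `x ∈ N` whose degree `d x` exceeds `(|N| - r - 2) / 2`: if `|N| ≤ t`
there are at most `t` of them, and otherwise each contributes at least `t / 4` to the degree sum. -/
lemma card_filter_le_threshold {V : Type*} [DecidableEq V] (N : Finset V) (d : V → ℕ) (r : ℕ)
    (t : ℝ) (ht : 2 * ((r : ℝ) + 2) ≤ t) :
    ((N.filter (fun x => N.card < 2 * d x + (r + 2))).card : ℝ) ≤
      t + 4 / t * ∑ x ∈ N, (d x : ℝ) := by
  have ht0 : 0 < t := by have : (0 : ℝ) ≤ r := Nat.cast_nonneg r; linarith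
  have hsum : 0 ≤ ∑ x ∈ N, (d x : ℝ) := Finset.sum_nonneg fun x _ => Nat.cast_nonneg _
  rcases le_total (N.card : ℝ) t with h | h
  · have h1 : ((N.filter (fun x => N.card < 2 * d x + (r + 2))).card : ℝ) ≤ N.card :=
      Nat.cast_le.2 (Finset.card_filter_le _ _)
    have : 0 ≤ 4 / t * ∑ x ∈ N, (d x : ℝ) := by positivity
    linarith
  · have h1 : ((N.filter (fun x => N.card < 2 * d x + (r + 2))).card : ℝ) * (t / 4) ≤
        ∑ x ∈ N, (d x : ℝ) := by
      rw [← nsmul_eq_mul]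
      refine (Finset.card_nsmul_le_sum _ (fun x => (d x : ℝ)) _ fun x hx => ?_).trans
        (Finset.sum_le_sum_of_subset_of_nonneg (Finset.filter_subset _ _)
          fun x _ _ => Nat.cast_nonneg _)
      have hx := (Finset.mem_filter.1 hx).2
      have hx' : (N.card : ℝ) < 2 * d x + (r + 2) := by exact_mod_cast hx
      linarith
    have h2 : ((N.filter (fun x => N.card < 2 * d x + (r + 2))).card : ℝ) =
        4 / t * (((N.filter (fun x => N.card < 2 * d x + (r + 2))).card : ℝ) * (t / 4)) := by
      field_simp
    rw [h2]
    have := mul_le_mul_of_nonneg_left h1 (by positivity : 0 ≤ 4 / t)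
    linarith

/-- Double counting of the quadruples `(x, x', y, z)` for which `xyz` and `x'yz` do not form an
admissible pair. -/
lemma sum_badCompletions_le {V : Type*} [Fintype V] [DecidableEq V] (H : Finset (Finset V))
    {p ε : ℝ} (hp : 0 < p) (hp1 : p ≤ 1) (hε : 0 < ε) (k : ℕ) :
    ∑ a : V × V, (if a.1 ≠ a.2 then
      ∑ x ∈ completions H a.1 a.2, ((badCompletions H p ε k x a.1 a.2).card : ℝ) else 0) ≤
      (Fintype.card V : ℝ) ^ 2 * (4 * k * Fintype.card V / (ε * p ^ 2)) := by
  classical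
  have hB : ∀ x x' : V, (∑ a : V × V,
      if (linkInter H x x').Adj a.1 a.2 ∧ ¬ EdgeAdmissible (linkInter H x x') p ε k a.1 a.2
        then (1 : ℝ) else 0) ≤ 4 * k * Fintype.card V / (ε * p ^ 2) := by
    intro x x'
    rw [le_div_iff₀ (by positivity)]
    refine le_trans (le_of_eq ?_) (card_not_edgeAdmissible_le (ε := ε) (linkInter H x x') hp hp1 k)
    rw [Finset.sum_boole]
  calc _ ≤ ∑ a : V × V, ∑ x : V, ∑ x' : V,
        (if (linkInter H x x').Adj a.1 a.2 ∧ ¬ EdgeAdmissible (linkInter H x x') p ε k a.1 a.2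
          then (1 : ℝ) else 0) := by
        refine Finset.sum_le_sum fun a _ => ?_
        have h0 : ∀ x x' : V, (0 : ℝ) ≤ (if (linkInter H x x').Adj a.1 a.2 ∧
            ¬ EdgeAdmissible (linkInter H x x') p ε k a.1 a.2 then (1 : ℝ) else 0) := by
          intro x x'; split_ifs <;> norm_num
        split_ifs with hne
        · refine le_trans ?_ (Finset.sum_le_sum_of_subset_of_nonneg
            (Finset.subset_univ (completions H a.1 a.2))
            fun x _ _ => Finset.sum_nonneg fun x' _ => h0 x x')
          refine Finset.sum_le_sum fun x hx => ?_
          rw [Finset.sum_boole]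
          refine Nat.cast_le.2 (Finset.card_le_card fun x' hx' => ?_)
          obtain ⟨h1, h2⟩ := Finset.mem_filter.1 hx'
          refine Finset.mem_filter.2 ⟨Finset.mem_univ _, ?_, h2⟩
          exact ⟨hne, Or.inl ⟨mem_completions.1 hx, mem_completions.1 h1⟩⟩
        · exact Finset.sum_nonneg fun x _ => Finset.sum_nonneg fun x' _ => h0 x x'
    _ = ∑ x : V, ∑ x' : V, ∑ a : V × V,
        (if (linkInter H x x').Adj a.1 a.2 ∧ ¬ EdgeAdmissible (linkInter H x x') p ε k a.1 a.2
          then (1 : ℝ) else 0) := by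
        rw [Finset.sum_comm]
        exact Finset.sum_congr rfl fun x _ => Finset.sum_comm
    _ ≤ ∑ x : V, ∑ x' : V, 4 * k * Fintype.card V / (ε * p ^ 2) :=
        Finset.sum_le_sum fun x _ => Finset.sum_le_sum fun x' _ => hB x x'
    _ = _ := by
        simp only [Finset.sum_const, Finset.card_univ, nsmul_eq_mul]
        ring

open Classical in
lemma card_isBadTriple_le {V : Type*} [Fintype V] [DecidableEq V] (H : Finset (Finset V))
    {p ε : ℝ} (hp : 0 < p) (hp1 : p ≤ 1) (hε : 0 < ε) (k r : ℕ) (t : ℝ)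
    (ht : 2 * ((r : ℝ) + 2) ≤ t) :
    (((Finset.univ : Finset (V × V × V)).filter
      (fun b => IsBadTriple H p ε k r b.1 b.2.1 b.2.2)).card : ℝ) ≤
      (Fintype.card V : ℝ) ^ 2 * (t + 4 / t * (4 * k * Fintype.card V / (ε * p ^ 2))) := by
  have ht0 : 0 < t := by have : (0 : ℝ) ≤ r := Nat.cast_nonneg r; linarith
  rw [← Finset.sum_boole, Fintype.sum_prod_type_right]
  calc _ ≤ ∑ a : V × V, (t + 4 / t * (if a.1 ≠ a.2 then
      ∑ x ∈ completions H a.1 a.2, ((badCompletions H p ε k x a.1 a.2).card : ℝ) else 0)) := by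
        refine Finset.sum_le_sum fun a _ => ?_
        rw [Finset.sum_boole]
        split_ifs with hne
        · refine le_trans (le_of_eq ?_) (card_filter_le_threshold (completions H a.1 a.2)
            (fun x => (badCompletions H p ε k x a.1 a.2).card) r t ht)
          congr 2
          ext x
          simp [IsBadTriple, hne]
        · have : Finset.univ.filter (fun x => IsBadTriple H p ε k r x a.1 a.2) = ∅ :=
            Finset.filter_eq_empty_iff.2 fun x _ h => hne h.1
          rw [this]
          simpa using ht0.le
    _ = (Fintype.card V : ℝ) ^ 2 * t + 4 / t * ∑ a : V × V, (if a.1 ≠ a.2 then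
      ∑ x ∈ completions H a.1 a.2, ((badCompletions H p ε k x a.1 a.2).card : ℝ) else 0) := by
        rw [Finset.sum_add_distrib, Finset.mul_sum]
        simp [sq]
    _ ≤ _ := by
        have := mul_le_mul_of_nonneg_left (sum_badCompletions_le H hp hp1 hε k)
          (by positivity : 0 ≤ 4 / t)
        linarith

open Classical in
/-- The edges containing a bad triple: those to be discarded. -/
noncomputable def badEdges {V : Type*} [Fintype V] [DecidableEq V] (H : Finset (Finset V))
    (p ε : ℝ) (k r : ℕ) : Finset (Finset V) :=
  H.filter (fun e => ∃ x y z, e = {x, y, z} ∧ IsBadTriple H p ε k r x y z)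

open Classical in
/-- Each bad edge accounts for at least two ordered bad triples, as `y` and `z` may be swapped. -/
lemma two_mul_card_badEdges_le {V : Type*} [Fintype V] [DecidableEq V] (H : Finset (Finset V))
    (p ε : ℝ) (k r : ℕ) :
    2 * (badEdges H p ε k r).card ≤ ((Finset.univ : Finset (V × V × V)).filter
      (fun b => IsBadTriple H p ε k r b.1 b.2.1 b.2.2)).card := by
  rw [Finset.card_eq_sum_card_fiberwise (f := fun b : V × V × V => ({b.1, b.2.1, b.2.2} : Finset V))
    (t := badEdges H p ε k r)]
  · rw [mul_comm, ← smul_eq_mul]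
    refine Finset.card_nsmul_le_sum _ _ _ fun e he => ?_
    obtain ⟨-, x, y, z, rfl, hb⟩ := Finset.mem_filter.1 he
    have hne : ((x, y, z) : V × V × V) ≠ (x, z, y) := by
      intro h
      simp only [Prod.mk.injEq] at h
      exact hb.1 h.2.1
    rw [← Finset.card_pair hne]
    refine Finset.card_le_card fun b hb' => ?_
    rcases Finset.mem_insert.1 hb' with rfl | hb'
    · simpa using hb
    · rw [Finset.mem_singleton] at hb'
      subst hb'
      simpa [Finset.pair_comm z y] using hb.symm
  · intro b hb
    have hb := (Finset.mem_filter.1 (Finset.mem_coe.1 hb)).2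
    exact Finset.mem_coe.2 (Finset.mem_filter.2
      ⟨mem_completions.1 hb.2.1, b.1, b.2.1, b.2.2, rfl, hb⟩)

lemma exists_eq_insert_of_inter {V : Type*} [DecidableEq V] {e f : Finset V} {y z : V}
    (he : e.card = 3) (hef : (e ∩ f).card = 2) (hyz : e ∩ f = {y, z}) :
    ∃ x, e = {x, y, z} ∧ x ∉ f := by
  have h1 : (e \ f).card = 1 := by
    have := Finset.card_sdiff_add_card_inter e f
    omega
  obtain ⟨x, hx⟩ := Finset.card_eq_one.1 h1
  refine ⟨x, ?_, ?_⟩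
  · rw [← Finset.sdiff_union_inter e f, hx, hyz, Finset.insert_eq x]
  · have : x ∈ e \ f := by simp [hx]
    exact (Finset.mem_sdiff.1 this).2

lemma not_mem_pair_of_completion {V : Type*} [Fintype V] [DecidableEq V] {H : Finset (Finset V)}
    (h3 : ∀ e ∈ H, e.card = 3) {x y z : V} (hx : x ∈ completions H y z) : x ≠ y ∧ x ≠ z := by
  have h := h3 _ (mem_completions.1 hx)
  constructor
  · rintro rfl
    have := Finset.card_le_two (a := x) (b := z)
    simp only [Finset.mem_insert, Finset.mem_singleton, true_or, Finset.insert_eq_of_mem] at h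
    omega
  · rintro rfl
    have := Finset.card_le_two (a := y) (b := x)
    simp only [Finset.mem_insert, Finset.mem_singleton, or_true, Finset.insert_eq_of_mem] at h
    omega

lemma pairAdmissible_of_edgeAdmissible {V : Type*} [Fintype V] [DecidableEq V]
    {H : Finset (Finset V)} (h3 : ∀ e ∈ H, e.card = 3) {p ε : ℝ} {k : ℕ} {x x' y z : V}
    (hyz : y ≠ z) (hx : x ∈ completions H y z) (hx' : x' ∈ completions H y z) (hne : x ≠ x')
    (h : EdgeAdmissible (linkInter H x x') p ε k y z) :
    PairAdmissible H p ε k {x, y, z} {x', y, z} := by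
  have h1 := not_mem_pair_of_completion h3 hx
  have h2 := not_mem_pair_of_completion h3 hx'
  exact ⟨x, x', y, z, rfl, rfl, by simp [h1, hne], by simp [h2, hne.symm], hyz, h⟩

/-- Two neighboring edges that survive the deletion each conflict with less than half of the edges
on their common pair, so at least `r` of these are compatible with both. -/
lemma semiAdmissible_of_not_mem_badEdges {V : Type*} [Fintype V] [DecidableEq V]
    {H : Finset (Finset V)} (h3 : ∀ e ∈ H, e.card = 3) {p ε : ℝ} {k r : ℕ} {e f : Finset V}
    (he : e ∈ H) (hf : f ∈ H) (heb : e ∉ badEdges H p ε k r) (hfb : f ∉ badEdges H p ε k r)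
    (hef : (e ∩ f).card = 2) : SemiAdmissible H p ε k r e f := by
  classical
  obtain ⟨y, z, hyz, hint⟩ := Finset.card_eq_two.1 hef
  obtain ⟨x, rfl, hxf⟩ := exists_eq_insert_of_inter (h3 e he) hef hint
  obtain ⟨x', rfl, hxe⟩ := exists_eq_insert_of_inter (h3 f hf)
    (by rw [Finset.inter_comm]; exact hef) (by rw [Finset.inter_comm]; exact hint)
  have hxx : x ≠ x' := by rintro rfl; simp at hxf
  have hxN : x ∈ completions H y z := mem_completions.2 he
  have hxN' : x' ∈ completions H y z := mem_completions.2 hf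
  have hgood : ∀ w, w ∈ completions H y z → ({w, y, z} : Finset V) ∉ badEdges H p ε k r →
      2 * (badCompletions H p ε k w y z).card + (r + 2) ≤ (completions H y z).card := by
    intro w hw hwb
    by_contra hlt
    push Not at hlt
    exact hwb (Finset.mem_filter.2 ⟨mem_completions.1 hw, w, y, z, rfl, hyz, hw, hlt⟩)
  have hg1 := hgood x hxN heb
  have hg2 := hgood x' hxN' hfb
  set N := completions H y z with hN
  set A := badCompletions H p ε k x y z with hA
  set B := badCompletions H p ε k x' y z with hB
  set C := N \ (A ∪ B ∪ {x, x'}) with hC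
  have hCcard : r ≤ C.card := by
    have h1 := Finset.le_card_sdiff (A ∪ B ∪ {x, x'}) N
    have h2 := Finset.card_union_le (A ∪ B) {x, x'}
    have h4 := Finset.card_union_le A B
    have h5 : ({x, x'} : Finset V).card ≤ 2 := Finset.card_le_two
    rw [hC]
    omega
  have hinj : Set.InjOn (fun w : V => ({w, y, z} : Finset V)) C := by
    intro w hw w' hw' heq
    have hwN := not_mem_pair_of_completion h3 (Finset.mem_sdiff.1 (Finset.mem_coe.1 hw)).1
    have : w ∈ ({w', y, z} : Finset V) := by
      have h : w ∈ ({w, y, z} : Finset V) := Finset.mem_insert_self _ _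
      exact (show ({w, y, z} : Finset V) = {w', y, z} from heq) ▸ h
    simpa [hwN] using this
  refine ⟨C.image (fun w => ({w, y, z} : Finset V)), ?_, ?_, ?_⟩
  · intro g hg
    obtain ⟨w, hw, rfl⟩ := Finset.mem_image.1 hg
    exact mem_completions.1 (Finset.mem_sdiff.1 hw).1
  · rw [Finset.card_image_of_injOn hinj]
    exact hCcard
  · intro g hg
    obtain ⟨w, hw, rfl⟩ := Finset.mem_image.1 hg
    obtain ⟨hwN, hw⟩ := Finset.mem_sdiff.1 hw
    simp only [Finset.mem_union, Finset.mem_insert, Finset.mem_singleton, not_or] at hw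
    obtain ⟨⟨hwA, hwB⟩, hwx, hwx'⟩ := hw
    have hadm : EdgeAdmissible (linkInter H x w) p ε k y z := by
      by_contra h
      exact hwA (Finset.mem_filter.2 ⟨hwN, h⟩)
    have hadm' : EdgeAdmissible (linkInter H x' w) p ε k y z := by
      by_contra h
      exact hwB (Finset.mem_filter.2 ⟨hwN, h⟩)
    refine ⟨?_, ?_, ?_⟩
    · rw [hint]
      exact Finset.subset_insert _ _
    · exact pairAdmissible_of_edgeAdmissible h3 hyz hxN hwN (Ne.symm hwx) hadm
    · rw [linkInter_comm] at hadm'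
      exact pairAdmissible_of_edgeAdmissible h3 hyz hwN hxN' hwx' hadm'

/-- a 3-uniform hypergraph `H` on `n` vertices with at least
`(13r/p)·√(k/ε)·n^{5/2}` edges has a subset `F` of at least half of its edges such that every
pair of neighboring edges of `F` is `(p, ε, k, r)`-semi-admissible in `H`. -/
theorem statement2 {V : Type*} [Fintype V] [DecidableEq V] (p ε : ℝ) (hp : 0 < p)
    (hp1 : p ≤ 1) (hε : 0 < ε) (hε1 : ε ≤ 1) (k r n : ℕ) (hk : 0 < k) (hr : 0 < r)
    (hn : 0 < n) (hV : Fintype.card V = n) (H : Finset (Finset V))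
    (h3 : ∀ e ∈ H, e.card = 3)
    (hcard : (13 * r / p) * Real.sqrt (k / ε) * (n : ℝ) ^ ((5 : ℝ) / 2) ≤ H.card) :
    ∃ F ⊆ H, (H.card : ℝ) / 2 ≤ F.card ∧
      ∀ e ∈ F, ∀ f ∈ F, (e ∩ f).card = 2 → SemiAdmissible H p ε k r e f := by
  classical
  set Q : ℝ := Real.sqrt (k / ε) * Real.sqrt n / p with hQ
  have hn1 : (1 : ℝ) ≤ n := by exact_mod_cast hn
  have hk1 : (1 : ℝ) ≤ k := by exact_mod_cast hk
  have hr1 : (1 : ℝ) ≤ r := by exact_mod_cast hr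
  have hQ1 : 1 ≤ Q := by
    rw [hQ, one_le_div hp]
    have h1 : 1 ≤ Real.sqrt (k / ε) := by
      rw [Real.one_le_sqrt, one_le_div hε]
      linarith
    have h2 : 1 ≤ Real.sqrt n := Real.one_le_sqrt.2 hn1
    nlinarith
  have hQsq : 4 * k * n / (ε * p ^ 2) = 4 * Q ^ 2 := by
    rw [hQ, div_pow, mul_pow, Real.sq_sqrt (by positivity), Real.sq_sqrt (by positivity)]
    field_simp
  have hcard' : 13 * r * Q * (n : ℝ) ^ 2 ≤ H.card := by
    have hpow : (n : ℝ) ^ ((5 : ℝ) / 2) = (n : ℝ) ^ 2 * Real.sqrt n := by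
      rw [Real.sqrt_eq_rpow, ← Real.rpow_natCast, ← Real.rpow_add (by linarith)]
      norm_num
    rw [hpow] at hcard
    refine le_trans (le_of_eq ?_) hcard
    rw [hQ]
    field_simp
  -- the threshold `6rQ` keeps both error terms small enough and, as `r, Q ≥ 1`, exceeds `2(r + 2)`
  have ht : 2 * ((r : ℝ) + 2) ≤ 6 * r * Q := by nlinarith
  have hT := card_isBadTriple_le H hp hp1 hε k r (6 * r * Q) ht
  rw [hV, hQsq] at hT
  have hM : 2 * ((badEdges H p ε k r).card : ℝ) ≤ H.card := by
    have h2 : ((2 * (badEdges H p ε k r).card : ℕ) : ℝ) ≤ ((_ : ℕ) : ℝ) :=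
      Nat.cast_le.2 (two_mul_card_badEdges_le H p ε k r)
    push_cast at h2
    refine (h2.trans hT).trans (le_trans ?_ hcard')
    have hq : 4 / (6 * r * Q) * (4 * Q ^ 2) ≤ 3 * r * Q := by
      rw [div_mul_eq_mul_div, div_le_iff₀ (by positivity)]
      have : (1 : ℝ) ≤ r ^ 2 := one_le_pow₀ hr1
      nlinarith [sq_nonneg Q]
    have hrQ : 0 ≤ r * Q := by positivity
    have : 6 * r * Q + 4 / (6 * r * Q) * (4 * Q ^ 2) ≤ 13 * r * Q := by nlinarith
    have := mul_le_mul_of_nonneg_left this (sq_nonneg (n : ℝ))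
    linarith
  have hsub : badEdges H p ε k r ⊆ H := Finset.filter_subset _ _
  refine ⟨H \ badEdges H p ε k r, Finset.sdiff_subset, ?_, ?_⟩
  · rw [Finset.cast_card_sdiff hsub]
    linarith
  · intro e he f hf hef
    obtain ⟨he, heb⟩ := Finset.mem_sdiff.1 he
    obtain ⟨hf, hfb⟩ := Finset.mem_sdiff.1 hf
    exact semiAdmissible_of_not_mem_badEdges h3 he hf heb hfb hef
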